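/- arXiv:1111.2777 — 2 statements merged into one kernel-verified Lean document; each statement's English description precedes it below -/
import Mathlib

section
/- A commutative Noetherian local ring R has finite global dimension if and only if R is a regular local ring, and in that case the global dimension of R equals the Krull dimension of R. -/
/-!
STATEMENT 6 (Serre): a commutative Noetherian local ring `R` has finite global dimension
if and only if `R` is a regular local ring; and in that case the global dimension of `R`
equals the Krull dimension of `R` (expressed here by: `gd(R) ≤ n ↔ dim R ≤ n` for all `n`).
-/

open CategoryTheory

/-- `M` has projective dimension `≤ n`. -/
def ProjDimLE (R : Type) [Ring R] (M : ModuleCat R) (n : ℕ) : Prop :=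
  ∃ P : ProjectiveResolution M, ∀ i : ℕ, n < i → Limits.IsZero (P.complex.X i)

/-- `R` has global dimension `≤ n`: every `R`-module has projective dimension `≤ n`. -/
def GlobalDimLE (R : Type) [Ring R] (n : ℕ) : Prop :=
  ∀ M : ModuleCat.{0} R, ProjDimLE R M n

/-- A commutative Noetherian local ring is regular if the embedding dimension
`dim_{R/m} (m/m²)` equals the Krull dimension of `R`. -/
def IsRegularLocal (R : Type) [CommRing R] [IsLocalRing R] : Prop :=
  (Module.finrank (IsLocalRing.ResidueField R) (IsLocalRing.CotangentSpace R) :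
    WithBot (WithTop ℕ)) = ringKrullDim R

/-
Let `m` be the maximal ideal, `k = R/m` and `x ∈ m \ m²`. Both directions are inductions that
replace `R` by `R/x`; when `x` is a nonzerodivisor on `R` and on a finitely generated module `M`,
one has `pd_{R/x} M/xM = pd_R M`.

If `R` is regular, so is `R/x`, and `R` is a domain. Applying the induction hypothesis to `K/xK`,
where `K` is the kernel of a surjection from a free module onto `M`, bounds `pd M` by the minimal
number of generators of `m`, which is `dim R`. By Baer's criterion cyclic modules suffice to bound
the global dimension.

Conversely, suppose `pd_R k ≤ n + 1` and `R` is not a field. Then `m` is not an associated prime of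
`R`: otherwise some nonzero `s` with `s m = 0` would kill the kernel of every minimal presentation,
so that every finitely generated module of finite projective dimension would be free. Prime
avoidance therefore gives `x ∈ m \ m²` regular on `R`. The class of `x` spans a copy of `k` in
`m/xm`, split off by the map to `m/m²`, so `pd_{R/x} k ≤ pd_{R/x} (m/xm) = pd_R m ≤ n`. By induction
`R/x` is regular of dimension at most `n`, hence `R` is regular of dimension at most `n + 1`.
-/

universe w v u

section ProjectiveResolution

open Limits

variable {C : Type u} [Category.{v} C]

lemma exact_epi_comp [HasZeroMorphisms C] {W X Y Z : C} {f : X ⟶ Y} {g : Y ⟶ Z} {w : f ≫ g = 0}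
    (h : (ShortComplex.mk f g w).Exact) (p : W ⟶ X) [Epi p] :
    (ShortComplex.mk (p ≫ f) g (by rw [Category.assoc, w, comp_zero])).Exact := by
  let φ : ShortComplex.mk (p ≫ f) g (by rw [Category.assoc, w, comp_zero]) ⟶
      ShortComplex.mk f g w := { τ₁ := p, τ₂ := 𝟙 Y, τ₃ := 𝟙 Z }
  have : Epi φ.τ₁ := ‹Epi p›
  have : IsIso φ.τ₂ := inferInstanceAs (IsIso (𝟙 Y))
  have : Mono φ.τ₃ := inferInstanceAs (Mono (𝟙 Z))
  exact (ShortComplex.exact_iff_of_epi_of_isIso_of_mono φ).2 h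

lemma exact_comp_mono [HasZeroMorphisms C] {X Y Z W : C} {f : X ⟶ Y} {g : Y ⟶ Z} {w : f ≫ g = 0}
    (h : (ShortComplex.mk f g w).Exact) (i : Z ⟶ W) [Mono i] :
    (ShortComplex.mk f (g ≫ i) (by rw [← Category.assoc, w, zero_comp])).Exact := by
  let φ : ShortComplex.mk f g w ⟶
      ShortComplex.mk f (g ≫ i) (by rw [← Category.assoc, w, zero_comp]) :=
    { τ₁ := 𝟙 X, τ₂ := 𝟙 Y, τ₃ := i }
  have : Epi φ.τ₁ := inferInstanceAs (Epi (𝟙 X))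
  have : IsIso φ.τ₂ := inferInstanceAs (IsIso (𝟙 Y))
  have : Mono φ.τ₃ := ‹Mono i›
  exact (ShortComplex.exact_iff_of_epi_of_isIso_of_mono φ).1 h

variable [Abelian C]

/-- The projective resolution of `Z` given by a complex `K` of projectives, exact in positive
degrees, and an augmentation `f : K.X 0 ⟶ Z` that is a cokernel of `K.d 1 0`. -/
noncomputable def projectiveResolutionOfExact (K : ChainComplex C ℕ)
    (projective : ∀ n, Projective (K.X n)) (exact_succ : ∀ n, K.ExactAt (n + 1))
    {Z : C} (f : K.X 0 ⟶ Z) (epi_f : Epi f) (w : K.d 1 0 ≫ f = 0)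
    (exact₀ : (ShortComplex.mk _ _ w).Exact) :
    ProjectiveResolution Z where
  complex := K
  projective := projective
  π := (ChainComplex.toSingle₀Equiv _ _).symm ⟨f, w⟩
  quasiIso := ⟨fun
    | 0 => by
      rw [ChainComplex.quasiIsoAt₀_iff, ShortComplex.quasiIso_iff_of_zeros' _
        (K.shape _ _ (by simp)) rfl rfl]
      have augmentation_f : ((ChainComplex.toSingle₀Equiv K Z).symm ⟨f, w⟩).f 0 = f := by simp
      refine (ShortComplex.exact_and_epi_g_iff_of_iso ?_).2 ⟨exact₀, epi_f⟩
      exact ShortComplex.isoMk (Iso.refl _) (Iso.refl _) (Iso.refl _)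
        ((Category.id_comp _).trans (Category.comp_id _).symm)
        ((Category.id_comp _).trans (augmentation_f.symm.trans (Category.comp_id _).symm))
    | n + 1 => by
      rw [quasiIsoAt_iff_exactAt' _ _ (ChainComplex.exactAt_succ_single_obj _ n)]
      exact exact_succ n⟩

lemma exists_projectiveResolution_isZero_of_shortExact {S : ShortComplex C} (hS : S.ShortExact)
    [Projective S.X₂] (n : ℕ) (Q : ProjectiveResolution S.X₁)
    (hQ : ∀ i, n < i → IsZero (Q.complex.X i)) :
    ∃ P : ProjectiveResolution S.X₃, ∀ i, n + 1 < i → IsZero (P.complex.X i) := by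
  obtain ⟨ε, _, hε, exact_ε⟩ : ∃ (ε : Q.complex.X 0 ⟶ S.X₁) (_ : Epi ε)
      (hε : Q.complex.d 1 0 ≫ ε = 0), (ShortComplex.mk _ _ hε).Exact :=
    ⟨Q.π.f 0, inferInstanceAs (Epi (Q.π.f 0)), Q.complex_d_comp_π_f_zero, Q.exact₀⟩
  have := hS.mono_f
  have w : Q.complex.d 1 0 ≫ ε ≫ S.f = 0 := by rw [← Category.assoc, hε, zero_comp]
  let K := Q.complex.augment (ε ≫ S.f) w
  have projective_K : ∀ n, Projective (K.X n)
    | 0 => ‹Projective S.X₂›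
    | n + 1 => Q.projective n
  have exact_K : ∀ n, K.ExactAt (n + 1)
    | 0 => by
      rw [HomologicalComplex.exactAt_iff' _ 2 1 0 (by simp) (by simp)]
      exact exact_comp_mono exact_ε S.f
    | n + 1 => by
      rw [HomologicalComplex.exactAt_iff' _ (n + 3) (n + 2) (n + 1) (by simp) (by simp)]
      exact Q.exact_succ n
  have w₀ : K.d 1 0 ≫ S.g = 0 := by
    change (ε ≫ S.f) ≫ S.g = 0
    rw [Category.assoc, S.zero, comp_zero]
  refine ⟨projectiveResolutionOfExact K projective_K exact_K S.g hS.epi_g w₀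
    (exact_epi_comp hS.exact ε), ?_⟩
  rintro (_ | i) hi
  · omega
  · exact hQ i (by omega)

lemma hasProjectiveDimensionLE_of_projectiveResolution [HasExt.{w} C] {M : C} {n : ℕ}
    (P : ProjectiveResolution M) (hP : ∀ i, n < i → IsZero (P.complex.X i)) :
    HasProjectiveDimensionLE M n := by
  refine (hasProjectiveDimensionLT_iff M (n + 1)).2 fun i hi Y e => ?_
  obtain ⟨f, hf, rfl⟩ := P.extMk_surjective e (i + 1) rfl
  obtain rfl : f = 0 := (hP i hi).eq_of_src _ _
  exact P.extMk_zero _ _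

lemma hasProjectiveDimensionLE_iff_exists_projectiveResolution [EnoughProjectives C]
    [HasExt.{w} C] {M : C} {n : ℕ} :
    HasProjectiveDimensionLE M n ↔
      ∃ P : ProjectiveResolution M, ∀ i, n < i → IsZero (P.complex.X i) := by
  refine ⟨fun h => ?_, fun ⟨P, hP⟩ => hasProjectiveDimensionLE_of_projectiveResolution P hP⟩
  induction n generalizing M with
  | zero =>
    have : Projective M := (projective_iff_hasProjectiveDimensionLE_zero M).2 h
    exact ⟨ProjectiveResolution.self M, fun i hi =>
      HomologicalComplex.isZero_single_obj_X _ _ _ _ (by omega)⟩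
  | succ n ih =>
    let S := ShortComplex.mk (kernel.ι (Projective.π M)) (Projective.π M) (kernel.condition _)
    have hS : S.ShortExact :=
      { exact := ShortComplex.exact_of_f_is_kernel _ (kernelIsKernel _)
        mono_f := inferInstanceAs (Mono (kernel.ι _))
        epi_g := inferInstanceAs (Epi (Projective.π M)) }
    have : Projective S.X₂ := Projective.projective_over M
    obtain ⟨Q, hQ⟩ := ih ((hS.hasProjectiveDimensionLT_X₃_iff n this).1 h)
    exact exists_projectiveResolution_isZero_of_shortExact hS n Q hQ

end ProjectiveResolution

section GlobalDimension

open Abelian Limits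

variable {R : Type u} [CommRing R]

lemma injective_of_forall_subsingleton_ext_quotient {N : ModuleCat.{u} R}
    (h : ∀ I : Ideal R, Subsingleton (Ext (ModuleCat.of R (R ⧸ I)) N 1)) : Injective N := by
  rw [← Module.injective_iff_injective_object, ← Module.Baer.iff_injective]
  intro I g
  have hS := ModuleCat.shortComplex_shortExact
    (ModuleCat.shortComplexOfCompEqZero I.subtype I.mkQ
      (LinearMap.exact_subtype_mkQ I).linearMap_comp_eq_zero)
    (LinearMap.exact_subtype_mkQ I) I.subtype_injective I.mkQ_surjective
  obtain ⟨e, he⟩ := Ext.contravariant_sequence_exact₁ hS N (Ext.mk₀ (ModuleCat.ofHom g))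
    (add_zero 1) ((h I).elim _ _)
  obtain ⟨f, rfl⟩ := (Ext.mk₀_bijective _ _).2 e
  rw [Ext.mk₀_comp_mk₀, (Ext.mk₀_bijective _ _).1.eq_iff] at he
  exact ⟨f.hom, fun x hx => congrArg (fun k => k.hom ⟨x, hx⟩) he⟩

lemma hasInjectiveDimensionLE_of_forall_subsingleton_ext_quotient {n : ℕ} {N : ModuleCat.{u} R}
    (h : ∀ I : Ideal R, Subsingleton (Ext (ModuleCat.of R (R ⧸ I)) N (n + 1))) :
    HasInjectiveDimensionLE N n := by
  induction n generalizing N with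
  | zero =>
    exact injective_iff_hasInjectiveDimensionLT_one.1
      (injective_of_forall_subsingleton_ext_quotient h)
  | succ n ih =>
    let S := ShortComplex.mk (Injective.ι N) (cokernel.π (Injective.ι N)) (cokernel.condition _)
    have hS : S.ShortExact :=
      { exact := ShortComplex.exact_cokernel _
        mono_f := inferInstanceAs (Mono (Injective.ι N))
        epi_g := inferInstanceAs (Epi (cokernel.π (Injective.ι N))) }
    have : Injective S.X₂ := inferInstanceAs (Injective (Injective.under N))
    refine (hS.hasInjectiveDimensionLT_X₃_iff n this).1 (ih fun I => ?_)
    refine subsingleton_of_forall_eq 0 fun e => ?_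
    obtain ⟨e', rfl⟩ := Ext.covariant_sequence_exact₃ _ hS e rfl ((h I).elim _ _)
    rw [Ext.eq_zero_of_injective e', Ext.zero_comp]

lemma hasProjectiveDimensionLE_of_forall_quotient {n : ℕ}
    (h : ∀ I : Ideal R, HasProjectiveDimensionLE (ModuleCat.of R (R ⧸ I)) n)
    (M : ModuleCat.{u} R) : HasProjectiveDimensionLE M n := by
  refine (hasProjectiveDimensionLT_iff M (n + 1)).2 fun i hi N e => ?_
  have : HasInjectiveDimensionLE N n :=
    hasInjectiveDimensionLE_of_forall_subsingleton_ext_quotient fun I =>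
      (h I).subsingleton _ _ _ le_rfl _
  exact e.eq_zero_of_hasInjectiveDimensionLT (n + 1) hi

end GlobalDimension

section ChangeOfRings

open IsLocalRing

lemma hasProjectiveDimensionLE_succ_iff_of_exact {R : Type u} [Ring R] {K P M : Type v}
    [AddCommGroup K] [Module R K] [AddCommGroup P] [Module R P] [AddCommGroup M] [Module R M]
    [Small.{v} R] [Module.Projective R P] {f : K →ₗ[R] P} {g : P →ₗ[R] M}
    (hf : Function.Injective f) (hfg : Function.Exact f g) (hg : Function.Surjective g) (n : ℕ) :
    HasProjectiveDimensionLE (ModuleCat.of R M) (n + 1) ↔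
      HasProjectiveDimensionLE (ModuleCat.of R K) n :=
  (ModuleCat.shortComplex_shortExact
    (ModuleCat.shortComplexOfCompEqZero f g hfg.linearMap_comp_eq_zero)
    hfg hf hg).hasProjectiveDimensionLT_X₃_iff n
      (inferInstanceAs (Projective (ModuleCat.of R P)))

lemma hasProjectiveDimensionLE_succ_iff_ker {R : Type u} [Ring R] {P M : Type v}
    [AddCommGroup P] [Module R P] [AddCommGroup M] [Module R M]
    [Small.{v} R] [Module.Projective R P] {f : P →ₗ[R] M} (hf : Function.Surjective f) (n : ℕ) :
    HasProjectiveDimensionLE (ModuleCat.of R M) (n + 1) ↔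
      HasProjectiveDimensionLE (ModuleCat.of R (LinearMap.ker f)) n :=
  hasProjectiveDimensionLE_succ_iff_of_exact (Submodule.subtype_injective _)
    (LinearMap.exact_subtype_ker_map f) hf n

variable {R : Type u} [CommRing R]

lemma hasProjectiveDimensionLE_zero_iff_free [IsLocalRing R] {M : Type v}
    [Small.{v} R] [AddCommGroup M] [Module R M] [Module.Finite R M] :
    HasProjectiveDimensionLE (ModuleCat.of R M) 0 ↔ Module.Free R M := by
  rw [← projective_iff_hasProjectiveDimensionLE_zero, ← IsProjective.iff_projective]
  exact ⟨fun _ => Module.free_of_flat_of_isLocalRing, fun _ => inferInstance⟩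

lemma isLocalRing_quotient [IsLocalRing R] {I : Ideal R} (hI : I ≤ maximalIdeal R) :
    IsLocalRing (R ⧸ I) :=
  have : Nontrivial (R ⧸ I) :=
    Ideal.Quotient.nontrivial_iff.2 (hI.trans_lt (lt_top_iff_ne_top.2 Ideal.IsPrime.ne_top')).ne
  .of_surjective' (Ideal.Quotient.mk I) Ideal.Quotient.mk_surjective

lemma isSMulRegular_of_flat {M : Type*} [AddCommGroup M] [Module R M] [Module.Flat R M] {x : R}
    (hx : IsSMulRegular R x) : IsSMulRegular M x :=
  ((TensorProduct.rid R M).isSMulRegular_congr x).1 (hx.lTensor M)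

lemma quotSMulTop_map_injective {x : R} {K P M : Type*} [AddCommGroup K] [Module R K]
    [AddCommGroup P] [Module R P] [AddCommGroup M] [Module R M] {f : K →ₗ[R] P} {g : P →ₗ[R] M}
    (hf : Function.Injective f) (hfg : Function.Exact f g) (hx : IsSMulRegular M x) :
    Function.Injective (QuotSMulTop.map x f) := by
  have := QuotSMulTop.map_first_exact_on_four_term_exact_of_isSMulRegular_last
    ((LinearMap.exact_zero_iff_injective K f).2 hf) hfg hx
  rwa [map_zero, LinearMap.exact_zero_iff_injective] at this

theorem hasProjectiveDimensionLE_quotSMulTop_iff [IsLocalRing R] [IsNoetherianRing R] {x : R}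
    (hx : x ∈ maximalIdeal R) (regR : IsSMulRegular R x) {M : Type u} [AddCommGroup M] [Module R M]
    [Module.Finite R M] (regM : IsSMulRegular M x) (n : ℕ) :
    HasProjectiveDimensionLE (ModuleCat.of (R ⧸ Ideal.span {x}) (QuotSMulTop x M)) n ↔
      HasProjectiveDimensionLE (ModuleCat.of R M) n := by
  have := isLocalRing_quotient ((Ideal.span_singleton_le_iff_mem _).2 hx)
  induction n generalizing M with
  | zero =>
    have := Module.finitePresentation_of_finite R M
    have := Module.Finite.of_restrictScalars_finite R (R ⧸ Ideal.span {x}) (QuotSMulTop x M)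
    rw [hasProjectiveDimensionLE_zero_iff_free, hasProjectiveDimensionLE_zero_iff_free]
    exact Module.free_quotSMulTop_iff_free R M (maximalIdeal_le_jacobson _ hx) regM
  | succ n ih =>
    obtain ⟨F, _, _, _, _, f, hf⟩ := Module.exists_finite_presentation R M
    have exact_f := LinearMap.exact_subtype_ker_map f
    have surj : Function.Surjective (algebraMap R (R ⧸ Ideal.span {x})) :=
      Ideal.Quotient.mk_surjective
    let i' : QuotSMulTop x (LinearMap.ker f) →ₗ[R ⧸ Ideal.span {x}] QuotSMulTop x F :=
      (QuotSMulTop.map x (LinearMap.ker f).subtype).extendScalarsOfSurjective surj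
    let f' : QuotSMulTop x F →ₗ[R ⧸ Ideal.span {x}] QuotSMulTop x M :=
      (QuotSMulTop.map x f).extendScalarsOfSurjective surj
    have inj_i' : Function.Injective i' :=
      quotSMulTop_map_injective (f := (LinearMap.ker f).subtype) (Submodule.subtype_injective _)
        exact_f regM
    have exact_i'_f' : Function.Exact i' f' := QuotSMulTop.map_exact x exact_f hf
    have surj_f' : Function.Surjective f' := QuotSMulTop.map_surjective x hf
    rw [hasProjectiveDimensionLE_succ_iff_of_exact inj_i' exact_i'_f' surj_f',
      hasProjectiveDimensionLE_succ_iff_ker hf]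
    exact ih ((isSMulRegular_of_flat regR).submodule (LinearMap.ker f) x)

end ChangeOfRings

section Generators

open IsLocalRing

variable {R : Type*} [CommRing R]

section Module

variable {M : Type*} [AddCommGroup M] [Module R M]

lemma exists_span_range_eq_of_fg {N : Submodule R M} (hN : N.FG) :
    ∃ v : Fin N.spanFinrank → M, Submodule.span R (Set.range v) = N := by
  obtain ⟨s, hs, span_s⟩ := hN.exists_span_finset_card_eq_spanFinrank
  refine ⟨Subtype.val ∘ (s.equivFinOfCardEq hs).symm, Eq.trans ?_ span_s⟩
  rw [EquivLike.range_comp, Subtype.range_coe_subtype, Finset.setOfPred_mem]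

lemma exists_span_insert_eq_of_isUnit {n : ℕ} (v : Fin n → M) {a : Fin n → R} {j : Fin n}
    (ha : IsUnit (a j)) :
    ∃ s : Set M, s.Finite ∧ s.ncard < n ∧
      Submodule.span R (insert (∑ i, a i • v i) s) = Submodule.span R (Set.range v) := by
  let s := v '' {j}ᶜ
  have v_mem : ∀ i ≠ j, v i ∈ Submodule.span R (insert (∑ i, a i • v i) s) := fun i hi =>
    Submodule.subset_span (Set.mem_insert_of_mem _ (Set.mem_image_of_mem v hi))
  have v_j_mem : v j ∈ Submodule.span R (insert (∑ i, a i • v i) s) := by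
    refine (Submodule.smul_mem_iff_of_isUnit _ ha).1 ?_
    rw [← sub_eq_of_eq_add (Finset.add_sum_erase _ (fun i => a i • v i) (Finset.mem_univ j)).symm]
    exact Submodule.sub_mem _ (Submodule.subset_span (Set.mem_insert _ _))
      (Submodule.sum_mem _ fun i hi => Submodule.smul_mem _ _ (v_mem i (Finset.ne_of_mem_erase hi)))
  refine ⟨s, Set.toFinite s, ?_, le_antisymm (Submodule.span_le.2 ?_) (Submodule.span_le.2 ?_)⟩
  · calc s.ncard ≤ ({j}ᶜ : Set (Fin n)).ncard := Set.ncard_image_le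
      _ < n := by
        rw [Set.ncard_compl, Set.ncard_singleton, Nat.card_fin]
        exact Nat.sub_lt j.pos one_pos
  · rintro _ (rfl | ⟨i, -, rfl⟩)
    · exact Submodule.sum_mem _ fun i _ =>
        Submodule.smul_mem _ _ (Submodule.subset_span (Set.mem_range_self i))
    · exact Submodule.subset_span (Set.mem_range_self i)
  · rintro _ ⟨i, rfl⟩
    by_cases hi : i = j
    · exact hi ▸ v_j_mem
    · exact v_mem i hi

lemma exists_surjective_forall_mem_ker_mem_maximalIdeal [IsLocalRing R] [Module.Finite R M] :
    ∃ (n : ℕ) (f : (Fin n → R) →ₗ[R] M), Function.Surjective f ∧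
      ∀ a ∈ LinearMap.ker f, ∀ j, a j ∈ maximalIdeal R := by
  obtain ⟨v, hv⟩ := exists_span_range_eq_of_fg (Module.Finite.fg_top (R := R) (M := M))
  refine ⟨_, Fintype.linearCombination R v, ?_, fun a ha j => ?_⟩
  · rw [← LinearMap.range_eq_top, Fintype.range_linearCombination, hv]
  · by_contra hj
    obtain ⟨s, finite_s, card_s, span_s⟩ :=
      exists_span_insert_eq_of_isUnit v (notMem_maximalIdeal.1 hj)
    rw [LinearMap.mem_ker, Fintype.linearCombination_apply] at ha
    rw [ha, Submodule.span_insert_zero, hv] at span_s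
    have := Submodule.spanFinrank_span_le_ncard_of_finite (R := R) finite_s
    rw [span_s] at this
    omega

lemma exists_span_insert_eq_of_notMem_maximalIdeal_smul [IsLocalRing R] {N : Submodule R M}
    (hN : N.FG) {x : M} (hx : x ∈ N) (hx' : x ∉ maximalIdeal R • N) :
    ∃ s : Set M, s.Finite ∧ s.ncard < N.spanFinrank ∧ Submodule.span R (insert x s) = N := by
  obtain ⟨v, hv⟩ := exists_span_range_eq_of_fg hN
  obtain ⟨a, rfl⟩ := (Submodule.mem_span_range_iff_exists_fun R).1 (hv ▸ hx)
  obtain ⟨j, hj⟩ : ∃ j, IsUnit (a j) := by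
    by_contra! nonunit
    exact hx' (Submodule.sum_mem _ fun i _ => Submodule.smul_mem_smul
      ((mem_maximalIdeal _).2 (nonunit i)) (hv ▸ Submodule.subset_span (Set.mem_range_self i)))
  obtain ⟨s, finite_s, card_s, span_s⟩ := exists_span_insert_eq_of_isUnit v hj
  exact ⟨s, finite_s, card_s, span_s.trans hv⟩

end Module

lemma spanFinrank_map_quotient_span_singleton_lt [IsLocalRing R] {I : Ideal R} (hI : I.FG) {x : R}
    (hx : x ∈ I) (hx' : x ∉ maximalIdeal R • I) :
    (I.map (Ideal.Quotient.mk (Ideal.span {x}))).spanFinrank < I.spanFinrank := by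
  obtain ⟨s, finite_s, card_s, span_s⟩ :=
    exists_span_insert_eq_of_notMem_maximalIdeal_smul hI hx hx'
  have map_I : I.map (Ideal.Quotient.mk (Ideal.span {x})) =
      Ideal.span (Ideal.Quotient.mk (Ideal.span {x}) '' s) := by
    nth_rw 1 [← span_s]
    rw [← Ideal.span, Ideal.map_span, Set.image_insert_eq,
      Ideal.Quotient.eq_zero_iff_mem.2 (Ideal.mem_span_singleton_self x), Ideal.span_insert_zero]
  rw [map_I]
  exact ((Submodule.spanFinrank_span_le_ncard_of_finite (finite_s.image _)).trans
    (Set.ncard_image_le finite_s)).trans_lt card_s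

lemma spanFinrank_le_spanFinrank_map_quotient_add_one {I : Ideal R} (hI : I.FG) {x : R}
    (hx : x ∈ I) :
    I.spanFinrank ≤ (I.map (Ideal.Quotient.mk (Ideal.span {x}))).spanFinrank + 1 := by
  let π := Ideal.Quotient.mk (Ideal.span {x})
  obtain ⟨v, hv⟩ := exists_span_range_eq_of_fg (hI.map π)
  choose u hu using fun i => Ideal.Quotient.mk_surjective (I := Ideal.span {x}) (v i)
  have map_u : (Ideal.span (Set.range u)).map π = I.map π := by
    rw [Ideal.map_span, ← Set.range_comp]
    exact (congrArg (fun w => Ideal.span (Set.range w)) (funext hu)).trans hv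
  have span_eq : I = Ideal.span (insert x (Set.range u)) := by
    have := congrArg (Ideal.comap π) map_u
    rw [Ideal.comap_map_of_surjective' _ Ideal.Quotient.mk_surjective,
      Ideal.comap_map_of_surjective' _ Ideal.Quotient.mk_surjective, Ideal.mk_ker,
      sup_eq_left.2 ((Ideal.span_singleton_le_iff_mem I).2 hx)] at this
    rw [Ideal.span_insert, sup_comm, this]
  calc I.spanFinrank = (Ideal.span (insert x (Set.range u))).spanFinrank := by rw [← span_eq]
    _ ≤ (insert x (Set.range u)).ncard :=
      Submodule.spanFinrank_span_le_ncard_of_finite (Set.toFinite _)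
    _ ≤ (Set.range u).ncard + 1 := Set.ncard_insert_le _ _
    _ ≤ (I.map π).spanFinrank + 1 := by
      rw [← Set.image_univ]
      exact Nat.succ_le_succ ((Set.ncard_image_le).trans_eq (by simp))

end Generators

section RegularLocalRing

open IsLocalRing

variable {R : Type u} [CommRing R]

section IsLocalRing

variable [IsLocalRing R] [IsNoetherianRing R]

lemma spanFinrank_maximalIdeal_eq_zero_iff_isField :
    (maximalIdeal R).spanFinrank = 0 ↔ IsField R := by
  rw [Submodule.spanFinrank_eq_zero_iff_eq_bot (maximalIdeal R).fg_of_isNoetherianRing,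
    isField_iff_maximalIdeal_eq]

lemma spanFinrank_maximalIdeal_quotient_add_one_le {x : R} (hx : x ∈ maximalIdeal R)
    (hx' : x ∉ maximalIdeal R ^ 2) [IsLocalRing (R ⧸ Ideal.span {x})] :
    (maximalIdeal (R ⧸ Ideal.span {x})).spanFinrank + 1 ≤ (maximalIdeal R).spanFinrank := by
  rw [← map_maximalIdeal_of_surjective _ Ideal.Quotient.mk_surjective]
  exact spanFinrank_map_quotient_span_singleton_lt (maximalIdeal R).fg_of_isNoetherianRing hx
    (by rwa [smul_eq_mul, ← pow_two])

lemma spanFinrank_maximalIdeal_le_quotient_add_one {x : R} (hx : x ∈ maximalIdeal R)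
    [IsLocalRing (R ⧸ Ideal.span {x})] :
    (maximalIdeal R).spanFinrank ≤ (maximalIdeal (R ⧸ Ideal.span {x})).spanFinrank + 1 := by
  rw [← map_maximalIdeal_of_surjective _ Ideal.Quotient.mk_surjective]
  exact spanFinrank_le_spanFinrank_map_quotient_add_one
    (maximalIdeal R).fg_of_isNoetherianRing hx

lemma isRegularLocalRing_of_quotient_span_singleton {x : R} (hx : x ∈ maximalIdeal R)
    (reg : IsSMulRegular R x) [IsRegularLocalRing (R ⧸ Ideal.span {x})] :
    IsRegularLocalRing R := by
  apply IsRegularLocalRing.of_spanFinrank_maximalIdeal_le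
  rw [← ringKrullDim_quotient_span_singleton_succ_eq_ringKrullDim reg hx,
    ← (isRegularLocalRing_iff (R ⧸ Ideal.span {x})).1 inferInstance]
  exact_mod_cast spanFinrank_maximalIdeal_le_quotient_add_one hx

lemma exists_mem_maximalIdeal_notMem_sq_notMem_primes (hR : ¬ IsField R) {S : Set (Ideal R)}
    (finite_S : S.Finite) (prime_S : ∀ p ∈ S, p.IsPrime) (hS : maximalIdeal R ∉ S) :
    ∃ x ∈ maximalIdeal R, x ∉ maximalIdeal R ^ 2 ∧ ∀ p ∈ S, x ∉ p := by
  have not_subset : ¬ (maximalIdeal R : Set R) ⊆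
      ⋃ p ∈ insert (maximalIdeal R ^ 2) S, (p : Set R) := by
    intro subset
    -- Prime avoidance allows two non-prime ideals; `m ^ 2` fills both places.
    obtain ⟨p, rfl | hp, le_p⟩ := (Ideal.subset_union_prime_finite (f := id) (finite_S.insert _)
      (maximalIdeal R ^ 2) (maximalIdeal R ^ 2)
      fun p hp hne _ => prime_S p (Set.mem_of_mem_insert_of_ne hp hne)).1 subset
    · exact ((maximalIdeal_sq_lt_maximalIdeal R).2 hR).not_ge le_p
    · exact hS ((maximalIdeal.isMaximal R).eq_of_le (prime_S p hp).ne_top le_p ▸ hp)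
  obtain ⟨x, hx, notMem⟩ := Set.not_subset.1 not_subset
  simp only [Set.mem_iUnion, not_exists] at notMem
  exact ⟨x, hx, notMem _ (Set.mem_insert _ _),
    fun p hp => notMem p (Set.mem_insert_of_mem _ hp)⟩

lemma isDomain_of_isDomain_quotient_span_singleton {x : R} (hx : x ∈ maximalIdeal R)
    (hx' : ∀ p ∈ minimalPrimes R, x ∉ p) [IsDomain (R ⧸ Ideal.span {x})] : IsDomain R := by
  have : (Ideal.span {x}).IsPrime := (Ideal.Quotient.isDomain_iff_prime _).1 inferInstance
  obtain ⟨p, minimal_p, p_le⟩ := Ideal.exists_minimalPrimes_le (bot_le (a := Ideal.span {x}))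
  have prime_p : p.IsPrime := minimal_p.1.1
  -- Every element of `p` is a multiple `x * r`, and `r ∈ p`; hence `p = x p` and Nakayama applies.
  have p_le_smul : p ≤ maximalIdeal R • p := by
    intro y hy
    obtain ⟨r, rfl⟩ := Ideal.mem_span_singleton.1 (p_le hy)
    exact Ideal.mul_mem_mul hx ((prime_p.mem_or_mem hy).resolve_left (hx' p minimal_p))
  have p_eq_bot : p = ⊥ := Submodule.eq_bot_of_le_smul_of_le_jacobson_bot _ p
    p.fg_of_isNoetherianRing p_le_smul (maximalIdeal_le_jacobson _)
  subst p_eq_bot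
  exact IsDomain.of_bot_isPrime R

end IsLocalRing

variable [IsRegularLocalRing R]

lemma isRegularLocalRing_quotient_span_singleton {x : R} (hx : x ∈ maximalIdeal R)
    (hx' : x ∉ maximalIdeal R ^ 2) : IsRegularLocalRing (R ⧸ Ideal.span {x}) := by
  have := isLocalRing_quotient ((Ideal.span_singleton_le_iff_mem _).2 hx)
  apply IsRegularLocalRing.of_spanFinrank_maximalIdeal_le
  rw [← ENat.WithBot.add_le_add_one_right_iff]
  calc ((maximalIdeal (R ⧸ Ideal.span {x})).spanFinrank : WithBot ℕ∞) + 1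
      ≤ (maximalIdeal R).spanFinrank :=
        mod_cast spanFinrank_maximalIdeal_quotient_add_one_le hx hx'
    _ = ringKrullDim R := (isRegularLocalRing_iff R).1 inferInstance
    _ = (maximalIdeal R).height := maximalIdeal_height_eq_ringKrullDim.symm
    _ ≤ ringKrullDim (R ⧸ Ideal.span {x}) + 1 := Ideal.height_le_ringKrullDim_quotient_add_one hx

variable (R) in
lemma maximalIdeal_notMem_minimalPrimes (hR : ¬ IsField R) :
    maximalIdeal R ∉ minimalPrimes R := by
  rw [← Ideal.height_eq_zero_iff]
  intro height_eq
  have dim_eq := (isRegularLocalRing_iff R).1 inferInstance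
  rw [← maximalIdeal_height_eq_ringKrullDim, height_eq] at dim_eq
  exact hR (spanFinrank_maximalIdeal_eq_zero_iff_isField.1 (mod_cast dim_eq))

variable (R) in
theorem isDomain_of_isRegularLocalRing : IsDomain R := by
  induction hn : (maximalIdeal R).spanFinrank generalizing R with
  | zero => exact (spanFinrank_maximalIdeal_eq_zero_iff_isField.1 hn).isDomain
  | succ n ih =>
    have not_isField : ¬ IsField R := by
      rw [← spanFinrank_maximalIdeal_eq_zero_iff_isField]
      omega
    obtain ⟨x, hx, hx', hx_minimal⟩ := exists_mem_maximalIdeal_notMem_sq_notMem_primes not_isField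
      (minimalPrimes.finite_of_isNoetherianRing R) (fun p hp => hp.1.1)
      (maximalIdeal_notMem_minimalPrimes R not_isField)
    have := isRegularLocalRing_quotient_span_singleton hx hx'
    have := spanFinrank_maximalIdeal_quotient_add_one_le hx hx'
    have := spanFinrank_maximalIdeal_le_quotient_add_one hx
    have := ih (R ⧸ Ideal.span {x}) (by omega)
    exact isDomain_of_isDomain_quotient_span_singleton hx hx_minimal

lemma hasProjectiveDimensionLE_spanFinrank_maximalIdeal (M : Type u) [AddCommGroup M] [Module R M]
    [Module.Finite R M] :
    HasProjectiveDimensionLE (ModuleCat.of R M) (maximalIdeal R).spanFinrank := by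
  induction hn : (maximalIdeal R).spanFinrank generalizing R M with
  | zero =>
    let := (spanFinrank_maximalIdeal_eq_zero_iff_isField.1 hn).toField
    exact hasProjectiveDimensionLE_zero_iff_free.2 (Module.Free.of_divisionRing R M)
  | succ n ih =>
    have not_isField : ¬ IsField R := by
      rw [← spanFinrank_maximalIdeal_eq_zero_iff_isField]
      omega
    obtain ⟨x, hx, hx'⟩ := SetLike.exists_of_lt ((maximalIdeal_sq_lt_maximalIdeal R).2 not_isField)
    have := isDomain_of_isRegularLocalRing R
    have reg : IsSMulRegular R x := .of_ne_zero fun h => hx' (h ▸ zero_mem _)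
    have := isRegularLocalRing_quotient_span_singleton hx hx'
    have := spanFinrank_maximalIdeal_quotient_add_one_le hx hx'
    have := spanFinrank_maximalIdeal_le_quotient_add_one hx
    obtain ⟨F, _, _, _, _, f, hf⟩ := Module.exists_finite_presentation R M
    have reg_ker := (isSMulRegular_of_flat (M := F) reg).submodule (LinearMap.ker f) x
    have := Module.Finite.of_restrictScalars_finite R (R ⧸ Ideal.span {x})
      (QuotSMulTop x (LinearMap.ker f))
    rw [hasProjectiveDimensionLE_succ_iff_ker hf,
      ← hasProjectiveDimensionLE_quotSMulTop_iff hx reg reg_ker]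
    exact ih _ (by omega)

end RegularLocalRing

section FiniteProjectiveDimension

open IsLocalRing

lemma isSMulRegular_of_forall_notMem_associatedPrimes {R M : Type*} [CommRing R]
    [IsNoetherianRing R] [AddCommGroup M] [Module R M] {x : R}
    (hx : ∀ p ∈ associatedPrimes R M, x ∉ p) : IsSMulRegular M x := by
  by_contra not_reg
  have mem : x ∈ ⋃ p ∈ associatedPrimes R M, (p : Set R) := by
    rwa [biUnion_associatedPrimes_eq_compl_regular]
  obtain ⟨p, hp, hxp⟩ := Set.mem_iUnion₂.1 mem
  exact hx p hp hxp

lemma exists_ne_zero_forall_smul_eq_zero_of_mem_associatedPrimes {R M : Type*} [CommRing R]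
    [IsNoetherianRing R] [AddCommGroup M] [Module R M] {p : Ideal R}
    (hp : p ∈ associatedPrimes R M) :
    ∃ s : M, s ≠ 0 ∧ ∀ a ∈ p, a • s = 0 := by
  obtain ⟨prime_p, s, rfl⟩ := isAssociatedPrime_iff.1 (AssociatedPrimes.mem_iff.1 hp)
  refine ⟨s, ?_, fun a ha => Submodule.mem_colon_singleton.1 ha⟩
  rintro rfl
  exact prime_p.one_notMem (Submodule.mem_colon_singleton.2 (smul_zero 1))

variable {R : Type u} [CommRing R] [IsLocalRing R]

lemma free_of_hasProjectiveDimensionLE_of_forall_mul_eq_zero [IsNoetherianRing R] {s : R}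
    (hs : s ≠ 0) (mul_s : ∀ a ∈ maximalIdeal R, a * s = 0) {n : ℕ} {M : Type u} [AddCommGroup M]
    [Module R M] [Module.Finite R M] (hM : HasProjectiveDimensionLE (ModuleCat.of R M) n) :
    Module.Free R M := by
  induction n generalizing M with
  | zero => exact hasProjectiveDimensionLE_zero_iff_free.1 hM
  | succ n ih =>
    obtain ⟨k, f, hf, ker_f⟩ :=
      exists_surjective_forall_mem_ker_mem_maximalIdeal (R := R) (M := M)
    have free_ker : Module.Free R (LinearMap.ker f) :=
      ih ((hasProjectiveDimensionLE_succ_iff_ker hf n).1 hM)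
    have smul_ker (a : LinearMap.ker f) : s • a = 0 :=
      Subtype.ext <| funext fun j => (mul_comm _ _).trans (mul_s _ (ker_f a a.2 j))
    have : Subsingleton (LinearMap.ker f) := by
      by_contra nontrivial
      rw [not_subsingleton_iff_nontrivial] at nontrivial
      refine hs (FaithfulSMul.eq_of_smul_eq_smul (M := R) (α := LinearMap.ker f) fun a => ?_)
      rw [smul_ker, zero_smul]
    have inj_f : Function.Injective f :=
      LinearMap.ker_eq_bot.1 (Submodule.subsingleton_iff_eq_bot.1 this)
    exact .of_equiv (LinearEquiv.ofBijective f ⟨inj_f, hf⟩)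

lemma isField_of_free_quotient_maximalIdeal [Module.Free R (R ⧸ maximalIdeal R)] : IsField R := by
  have : Nontrivial (R ⧸ maximalIdeal R) :=
    Ideal.Quotient.nontrivial_iff.2 (maximalIdeal.isMaximal R).ne_top
  rw [isField_iff_maximalIdeal_eq, ← Ideal.annihilator_quotient (I := maximalIdeal R)]
  exact Module.annihilator_eq_bot.2 inferInstance

lemma isRegularLocalRing_of_isField (hR : IsField R) : IsRegularLocalRing R := by
  have := hR.isDomain
  have := hR.isPrincipalIdealRing
  exact inferInstance

lemma nonempty_retract_quotient_maximalIdeal {M : Type u} [AddCommGroup M] [Module R M] {v : M}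
    (hv : ∀ a ∈ maximalIdeal R, a • v = 0) (hv' : v ∉ maximalIdeal R • (⊤ : Submodule R M)) :
    Nonempty (Retract (ModuleCat.of R (R ⧸ maximalIdeal R)) (ModuleCat.of R M)) := by
  let := Ideal.Quotient.field (maximalIdeal R)
  obtain ⟨f, hf⟩ := Module.Projective.exists_dual_eq_one (R ⧸ maximalIdeal R)
    (x := Submodule.Quotient.mk (p := maximalIdeal R • (⊤ : Submodule R M)) v)
    (by rwa [Ne, Submodule.Quotient.mk_eq_zero])
  let i : R ⧸ maximalIdeal R →ₗ[R] M :=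
    Submodule.liftQ _ (LinearMap.toSpanSingleton R M v) hv
  let r : M →ₗ[R] R ⧸ maximalIdeal R := f.restrictScalars R ∘ₗ Submodule.mkQ _
  have r_comp_i : r ∘ₗ i = LinearMap.id := by
    refine Submodule.linearMap_qext _ (LinearMap.ext_ring ?_)
    change f (Submodule.Quotient.mk ((1 : R) • v)) = 1
    rw [one_smul, hf]
  exact ⟨⟨ModuleCat.ofHom i, ModuleCat.ofHom r, ModuleCat.hom_ext r_comp_i⟩⟩

lemma mk_mem_maximalIdeal_iff {I : Ideal R} [IsLocalRing (R ⧸ I)] {a : R} :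
    Ideal.Quotient.mk I a ∈ maximalIdeal (R ⧸ I) ↔ a ∈ maximalIdeal R := by
  have := (Ideal.Quotient.mk_surjective (I := I)).isLocalHom
  rw [← Ideal.mem_comap, maximalIdeal_comap]

section QuotSMulTop

variable {x : R} [IsLocalRing (R ⧸ Ideal.span {x})]

lemma quotSMulTop_mk_notMem_maximalIdeal_smul_top (hx : x ∈ maximalIdeal R) {y : maximalIdeal R}
    (hy : (y : R) ∉ maximalIdeal R ^ 2) :
    (Submodule.Quotient.mk y : QuotSMulTop x (maximalIdeal R)) ∉
      maximalIdeal (R ⧸ Ideal.span {x}) •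
        (⊤ : Submodule (R ⧸ Ideal.span {x}) (QuotSMulTop x (maximalIdeal R))) := by
  let g : QuotSMulTop x (maximalIdeal R) →ₗ[R] CotangentSpace R :=
    Submodule.liftQ _ (maximalIdeal R).toCotangent (by
      rintro _ ⟨z, -, rfl⟩
      exact (map_smul _ x z).trans (Ideal.Cotangent.smul_eq_zero_of_mem hx _))
  intro hv
  have : g (Submodule.Quotient.mk y) = 0 := by
    refine Submodule.smul_induction_on (p := fun n => g n = 0) hv (fun a ha n _ => ?_)
      fun n n' hn hn' => by rw [map_add, hn, hn', add_zero]
    obtain ⟨b, rfl⟩ := Ideal.Quotient.mk_surjective a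
    exact (map_smul g b n).trans
      (Ideal.Cotangent.smul_eq_zero_of_mem (mk_mem_maximalIdeal_iff.1 ha) _)
  exact hy ((maximalIdeal R).toCotangent_eq_zero y |>.1 this)

lemma nonempty_retract_quotSMulTop_maximalIdeal (hx : x ∈ maximalIdeal R)
    (hx' : x ∉ maximalIdeal R ^ 2) :
    Nonempty (Retract
      (ModuleCat.of (R ⧸ Ideal.span {x})
        ((R ⧸ Ideal.span {x}) ⧸ maximalIdeal (R ⧸ Ideal.span {x})))
      (ModuleCat.of (R ⧸ Ideal.span {x}) (QuotSMulTop x (maximalIdeal R)))) := by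
  refine nonempty_retract_quotient_maximalIdeal (v := Submodule.Quotient.mk ⟨x, hx⟩)
    (fun a ha => ?_) (quotSMulTop_mk_notMem_maximalIdeal_smul_top hx hx')
  obtain ⟨b, rfl⟩ := Ideal.Quotient.mk_surjective a
  refine (Submodule.Quotient.mk_eq_zero _).2 ?_
  exact ⟨⟨b, mk_mem_maximalIdeal_iff.1 ha⟩, trivial, Subtype.ext (mul_comm x b)⟩

end QuotSMulTop

lemma isField_of_hasProjectiveDimensionLE_of_mem_associatedPrimes [IsNoetherianRing R] {n : ℕ}
    (hn : HasProjectiveDimensionLE (ModuleCat.of R (R ⧸ maximalIdeal R)) n)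
    (hm : maximalIdeal R ∈ associatedPrimes R R) : IsField R := by
  obtain ⟨s, hs, mul_s⟩ := exists_ne_zero_forall_smul_eq_zero_of_mem_associatedPrimes hm
  have := free_of_hasProjectiveDimensionLE_of_forall_mul_eq_zero hs mul_s hn
  exact isField_of_free_quotient_maximalIdeal

theorem isRegularLocalRing_and_ringKrullDim_le_of_hasProjectiveDimensionLE [IsNoetherianRing R]
    {n : ℕ} (hn : HasProjectiveDimensionLE (ModuleCat.of R (R ⧸ maximalIdeal R)) n) :
    IsRegularLocalRing R ∧ ringKrullDim R ≤ n := by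
  induction n generalizing R with
  | zero =>
    have := hasProjectiveDimensionLE_zero_iff_free.1 hn
    have isField : IsField R := isField_of_free_quotient_maximalIdeal
    exact ⟨isRegularLocalRing_of_isField isField, (ringKrullDim_eq_zero_of_isField isField).le⟩
  | succ n ih =>
    by_cases isField : IsField R
    · exact ⟨isRegularLocalRing_of_isField isField,
        (ringKrullDim_eq_zero_of_isField isField).trans_le (Nat.cast_nonneg _)⟩
    obtain ⟨x, hx, hx', hx_assoc⟩ := exists_mem_maximalIdeal_notMem_sq_notMem_primes isField
      (associatedPrimes.finite R R) (fun p hp => hp.isPrime)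
      (mt (isField_of_hasProjectiveDimensionLE_of_mem_associatedPrimes hn) isField)
    have reg : IsSMulRegular R x := isSMulRegular_of_forall_notMem_associatedPrimes hx_assoc
    have pd_maximalIdeal : HasProjectiveDimensionLE (ModuleCat.of R (maximalIdeal R)) n :=
      (hasProjectiveDimensionLE_succ_iff_of_exact (maximalIdeal R).subtype_injective
        (LinearMap.exact_subtype_mkQ _) (Submodule.mkQ_surjective _) n).1 hn
    have := isLocalRing_quotient ((Ideal.span_singleton_le_iff_mem _).2 hx)
    have pd_quotSMulTop := (hasProjectiveDimensionLE_quotSMulTop_iff hx reg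
      (reg.submodule (maximalIdeal R) x) n).2 pd_maximalIdeal
    obtain ⟨retract⟩ := nonempty_retract_quotSMulTop_maximalIdeal hx hx'
    obtain ⟨regular, dim_le⟩ := ih (retract.hasProjectiveDimensionLT (n + 1))
    refine ⟨isRegularLocalRing_of_quotient_span_singleton hx reg, ?_⟩
    rw [← ringKrullDim_quotient_span_singleton_succ_eq_ringKrullDim reg hx, Nat.cast_succ]
    exact add_le_add_left dim_le 1

theorem forall_hasProjectiveDimensionLE_iff [IsNoetherianRing R] {n : ℕ} :
    (∀ M : ModuleCat.{u} R, HasProjectiveDimensionLE M n) ↔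
      IsRegularLocalRing R ∧ ringKrullDim R ≤ n := by
  refine ⟨fun h => isRegularLocalRing_and_ringKrullDim_le_of_hasProjectiveDimensionLE (h _), ?_⟩
  rintro ⟨regular, dim_le⟩
  rw [← (isRegularLocalRing_iff R).1 regular, Nat.cast_le] at dim_le
  refine hasProjectiveDimensionLE_of_forall_quotient fun I => ?_
  have := hasProjectiveDimensionLE_spanFinrank_maximalIdeal (R := R) (R ⧸ I)
  exact hasProjectiveDimensionLT_of_ge _ ((maximalIdeal R).spanFinrank + 1) _ (by omega)

end FiniteProjectiveDimension

lemma globalDimLE_iff {R : Type} [CommRing R] [IsLocalRing R] [IsNoetherianRing R] {n : ℕ} :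
    GlobalDimLE R n ↔ IsRegularLocal R ∧ ringKrullDim R ≤ n :=
  calc GlobalDimLE R n ↔ ∀ M : ModuleCat.{0} R, HasProjectiveDimensionLE M n :=
        forall_congr' fun _ => hasProjectiveDimensionLE_iff_exists_projectiveResolution.symm
    _ ↔ IsRegularLocalRing R ∧ ringKrullDim R ≤ n := forall_hasProjectiveDimensionLE_iff
    _ ↔ IsRegularLocal R ∧ ringKrullDim R ≤ n := by
      rw [IsRegularLocalRing.iff_finrank_cotangentSpace]
      rfl

theorem serre_regular_iff_finite_globalDim
    (R : Type) [CommRing R] [IsLocalRing R] [IsNoetherianRing R] :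
    ((∃ n : ℕ, GlobalDimLE R n) ↔ IsRegularLocal R) ∧
      (IsRegularLocal R → ∀ n : ℕ, (GlobalDimLE R n ↔ ringKrullDim R ≤ n)) := by
  refine ⟨⟨?_, fun hR => ?_⟩, fun hR n => globalDimLE_iff.trans (and_iff_right hR)⟩
  · rintro ⟨n, hn⟩
    exact (globalDimLE_iff.1 hn).1
  · exact ⟨_, globalDimLE_iff.2 ⟨hR, hR.ge⟩⟩
end

section
/- An associative algebra A over a field k is formally smooth (i.e., every algebra homomorphism A → R/N, with N a nilpotent two-sided ideal of an algebra R, lifts to A → R) if and only if the kernel Ω¹_A of the multiplication map A ⊗_k A → A is a projective A-bimodule. -/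
/-!
STATEMENT 11: an associative `k`-algebra `A` is formally smooth (every `k`-algebra map
`A → R/N`, with `N` a nilpotent two-sided ideal of `R`, lifts to `A → R`) if and only if
the kernel `Ω¹_A` of the multiplication map `A ⊗_k A → A` is a projective `A`-bimodule,
i.e. projective as a module over `A^e = A ⊗_k Aᵐᵒᵖ`.
-/

open scoped TensorProduct

set_option synthInstance.maxHeartbeats 400000
set_option maxHeartbeats 1000000

/-- `A` is formally smooth over `k`: for every surjective `k`-algebra homomorphism
`p : R → S` whose kernel is nilpotent (some power of it, i.e. all products of `m`
kernel elements, vanish), every `k`-algebra map `A → S` lifts through `p`. -/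
def FormallySmoothNC (k A : Type) [Field k] [Ring A] [Algebra k A] : Prop :=
  ∀ (R S : Type) [Ring R] [Algebra k R] [Ring S] [Algebra k S] (p : R →ₐ[k] S),
    Function.Surjective p →
    (∃ m : ℕ, ∀ f : Fin m → R, (∀ i, p (f i) = 0) → (List.ofFn f).prod = 0) →
    ∀ φ : A →ₐ[k] S, ∃ ψ : A →ₐ[k] R, p.comp ψ = φ

section

variable (k A : Type) [Field k] [Ring A] [Algebra k A]

/-- The bimodule structure on `A`: `A` is a module over `A^e = A ⊗[k] Aᵐᵒᵖ`,
via `(a ⊗ bᵒᵖ) • x = a * x * b`. -/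
noncomputable local instance : Module (A ⊗[k] Aᵐᵒᵖ) A := TensorProduct.Algebra.module

/-- The multiplication map `A^e → A`, `a ⊗ bᵒᵖ ↦ a * b`, as a map of `A^e`-modules.
Under the identification `A ⊗[k] A ≅ A^e` of left `A^e`-modules this is the
multiplication map `A ⊗[k] A → A`, so its kernel is `Ω¹_A`. -/
noncomputable def mulMap : (A ⊗[k] Aᵐᵒᵖ) →ₗ[A ⊗[k] Aᵐᵒᵖ] A :=
  LinearMap.toSpanSingleton _ _ (1 : A)

/-!
`Ω¹_A` represents the derivations of `A` into bimodules, through `d a = a ⊗ 1 - 1 ⊗ a`.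

If `A` is formally smooth and `π : F → Ω¹_A` is a surjection from a free bimodule, then the algebra
map `a ↦ (a, d a)` lifts from the trivial extension of `A` by `Ω¹_A` to the one by `F`. The second
component of the lift is a derivation into `F`, hence gives a bimodule section of `π`, and `Ω¹_A` is
projective.

Conversely, quotients by the annihilator of the kernel reduce nilpotent kernels to kernels `N` of
square zero. Over a field an algebra map to `R / N` lifts to a linear map `s` into `R`, whose defect
`s a * s b - s (a * b)` is a Hochschild `2`-cocycle with values in the `A`-bimodule `N`. If `Ω¹_A`
is projective, then `HH²(A, N) = Ext¹(Ω¹_A, N) = 0`, and a primitive of the defect corrects `s` to a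
multiplicative lift. Concretely, the cocycle `f` gives `χ a : Ω¹_A → N`, `x ⊗ z ↦ f a x · z`, and
projectivity provides a right `A`-linear `h : Ω¹_A → N` with `h (a · x) = a · h x + χ a x`; up to
the normalization of `f`, the primitive is `h ∘ d`.
-/

section Bimodules

variable {k A : Type*} [CommSemiring k] [Semiring A] [Algebra k A]
  {M N : Type*} [AddCommMonoid M] [Module (A ⊗[k] Aᵐᵒᵖ) M]
  [AddCommMonoid N] [Module (A ⊗[k] Aᵐᵒᵖ) N]

theorem tmul_smul_eq_left_smul_right_smul (a : A) (b : Aᵐᵒᵖ) (x : M) :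
    (a ⊗ₜ[k] b) • x = (a ⊗ₜ[k] (1 : Aᵐᵒᵖ)) • ((1 : A) ⊗ₜ[k] b) • x := by
  simp [smul_smul]

theorem left_smul_right_smul_comm (a : A) (b : Aᵐᵒᵖ) (x : M) :
    (a ⊗ₜ[k] (1 : Aᵐᵒᵖ)) • ((1 : A) ⊗ₜ[k] b) • x =
      ((1 : A) ⊗ₜ[k] b) • (a ⊗ₜ[k] (1 : Aᵐᵒᵖ)) • x := by
  simp [smul_smul]

theorem map_smul_of_map_left_smul_of_map_right_smul (f : M →+ N)
    (hleft : ∀ (a : A) x, f ((a ⊗ₜ[k] (1 : Aᵐᵒᵖ)) • x) = (a ⊗ₜ[k] (1 : Aᵐᵒᵖ)) • f x)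
    (hright : ∀ (b : Aᵐᵒᵖ) x, f (((1 : A) ⊗ₜ[k] b) • x) = ((1 : A) ⊗ₜ[k] b) • f x)
    (t : A ⊗[k] Aᵐᵒᵖ) (x : M) : f (t • x) = t • f x := by
  induction t with
  | zero => rw [zero_smul (A ⊗[k] Aᵐᵒᵖ) x, zero_smul (A ⊗[k] Aᵐᵒᵖ) (f x), map_zero]
  | tmul a b =>
    rw [tmul_smul_eq_left_smul_right_smul, hleft, hright, ← tmul_smul_eq_left_smul_right_smul]
  | add t u ht hu => rw [add_smul, map_add, ht, hu, add_smul]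

variable [Module k M] [Module k N]

/-- Derivations of `A` into an `A`-bimodule, encoded as an `A ⊗[k] Aᵐᵒᵖ`-module: `a · x · b` is
`(a ⊗ op b) • x`. -/
def IsBimoduleDerivation (D : A →ₗ[k] M) : Prop :=
  ∀ a b, D (a * b) =
    (a ⊗ₜ[k] (1 : Aᵐᵒᵖ)) • D b + ((1 : A) ⊗ₜ[k] MulOpposite.op b) • D a

theorem IsBimoduleDerivation.map_one [IsLeftCancelAdd M] {D : A →ₗ[k] M}
    (hD : IsBimoduleDerivation D) : D 1 = 0 := by
  have h := hD 1 1
  rwa [mul_one, MulOpposite.op_one, ← Algebra.TensorProduct.one_def, one_smul, left_eq_add] at h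

/-- Hochschild `2`-cocycles with coefficients in an `A`-bimodule. The cocycle identity is written
with two terms on each side, so that no subtraction is needed. -/
def IsHochschildTwoCocycle (f : A →ₗ[k] A →ₗ[k] M) : Prop :=
  ∀ a b c, f (a * b) c + ((1 : A) ⊗ₜ[k] MulOpposite.op c) • f a b =
    (a ⊗ₜ[k] (1 : Aᵐᵒᵖ)) • f b c + f a (b * c)

theorem IsHochschildTwoCocycle.apply_one [IsRightCancelAdd M]
    {f : A →ₗ[k] A →ₗ[k] M} (hf : IsHochschildTwoCocycle f) (a : A) :
    f a 1 = (a ⊗ₜ[k] (1 : Aᵐᵒᵖ)) • f 1 1 := by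
  have h := hf a 1 1
  rwa [mul_one, mul_one, MulOpposite.op_one, ← Algebra.TensorProduct.one_def, one_smul,
    add_left_inj] at h

variable [IsScalarTower k (A ⊗[k] Aᵐᵒᵖ) M] [IsScalarTower k (A ⊗[k] Aᵐᵒᵖ) N]

/-- The map `a ↦ a · x` into an `A`-bimodule. -/
noncomputable def leftOrbit (x : M) : A →ₗ[k] M :=
  (LinearMap.toSpanSingleton _ _ x).restrictScalars k ∘ₗ
    (Algebra.TensorProduct.includeLeft : A →ₐ[k] A ⊗[k] Aᵐᵒᵖ).toLinearMap

/-- The map `a ↦ x · a` into an `A`-bimodule. -/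
noncomputable def rightOrbit (x : M) : A →ₗ[k] M :=
  (LinearMap.toSpanSingleton _ _ x).restrictScalars k ∘ₗ
    (Algebra.TensorProduct.includeRight : Aᵐᵒᵖ →ₐ[k] A ⊗[k] Aᵐᵒᵖ).toLinearMap ∘ₗ
      (MulOpposite.opLinearEquiv k).toLinearMap

@[simp]
theorem leftOrbit_apply (x : M) (a : A) : leftOrbit (k := k) x a = (a ⊗ₜ[k] (1 : Aᵐᵒᵖ)) • x := rfl

@[simp]
theorem rightOrbit_apply (x : M) (a : A) :
    rightOrbit (k := k) x a = ((1 : A) ⊗ₜ[k] MulOpposite.op a) • x := rfl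

/-- The right `A`-linear extension `x ⊗ z ↦ D x · z` of a linear map `D` into an `A`-bimodule. -/
noncomputable def rightExtend : (A →ₗ[k] M) →ₗ[k] A ⊗[k] Aᵐᵒᵖ →ₗ[k] M :=
  TensorProduct.uncurry (.id k) A Aᵐᵒᵖ M ∘ₗ LinearMap.llcomp k A M (Aᵐᵒᵖ →ₗ[k] M)
    ((Algebra.lsmul k k M).toLinearMap ∘ₗ
      (Algebra.TensorProduct.includeRight : Aᵐᵒᵖ →ₐ[k] A ⊗[k] Aᵐᵒᵖ).toLinearMap).flip

@[simp]
theorem rightExtend_tmul (D : A →ₗ[k] M) (x : A) (z : Aᵐᵒᵖ) :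
    rightExtend D (x ⊗ₜ z) = ((1 : A) ⊗ₜ[k] z) • D x := rfl

theorem rightExtend_left_mul (D : A →ₗ[k] M) (a : A) (t : A ⊗[k] Aᵐᵒᵖ) :
    rightExtend D ((a ⊗ₜ 1) * t) = rightExtend (D ∘ₗ LinearMap.mulLeft k a) t := by
  induction t with
  | zero => simp
  | tmul x z => simp
  | add t u ht hu => rw [mul_add, map_add, map_add, ht, hu]

theorem rightExtend_right_mul (D : A →ₗ[k] M) (b : Aᵐᵒᵖ) (t : A ⊗[k] Aᵐᵒᵖ) :
    rightExtend D ((1 ⊗ₜ b) * t) = ((1 : A) ⊗ₜ[k] b) • rightExtend D t := by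
  induction t with
  | zero => simp
  | tmul x z => simp [smul_smul]
  | add t u ht hu => rw [mul_add, map_add, map_add, ht, hu, smul_add]

theorem map_rightExtend (f : M →ₗ[k] N)
    (hf : ∀ (b : Aᵐᵒᵖ) x, f (((1 : A) ⊗ₜ[k] b) • x) = ((1 : A) ⊗ₜ[k] b) • f x)
    (D : A →ₗ[k] M) (t : A ⊗[k] Aᵐᵒᵖ) : f (rightExtend D t) = rightExtend (f ∘ₗ D) t := by
  induction t with
  | zero => simp
  | tmul x z => simp [hf]
  | add t u ht hu => rw [map_add, map_add, map_add, ht, hu]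

theorem rightExtend_left_smul (a : A) (D : A →ₗ[k] M) (t : A ⊗[k] Aᵐᵒᵖ) :
    rightExtend (Algebra.lsmul k k M (a ⊗ₜ[k] (1 : Aᵐᵒᵖ)) ∘ₗ D) t =
      (a ⊗ₜ[k] (1 : Aᵐᵒᵖ)) • rightExtend D t :=
  (map_rightExtend (Algebra.lsmul k k M (a ⊗ₜ[k] (1 : Aᵐᵒᵖ)))
    (left_smul_right_smul_comm a) D t).symm

theorem rightExtend_leftOrbit (x : M) (t : A ⊗[k] Aᵐᵒᵖ) : rightExtend (leftOrbit x) t = t • x :=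
  LinearMap.congr_fun (g := (LinearMap.toSpanSingleton _ _ x).restrictScalars k)
    (TensorProduct.ext' fun a b => by simp [smul_smul]) t

theorem exists_potential_of_projective [Module.Projective (A ⊗[k] Aᵐᵒᵖ) N]
    (χ : A →ₗ[k] N →ₗ[k] M)
    (hχ_mul : ∀ a b x,
      χ (a * b) x = (a ⊗ₜ[k] (1 : Aᵐᵒᵖ)) • χ b x + χ a ((b ⊗ₜ[k] (1 : Aᵐᵒᵖ)) • x))
    (hχ_right : ∀ a (b : Aᵐᵒᵖ) x,
      χ a (((1 : A) ⊗ₜ[k] b) • x) = ((1 : A) ⊗ₜ[k] b) • χ a x) :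
    ∃ h : N →ₗ[k] M,
      (∀ (a : A) x, h ((a ⊗ₜ[k] (1 : Aᵐᵒᵖ)) • x) = (a ⊗ₜ[k] (1 : Aᵐᵒᵖ)) • h x + χ a x) ∧
      ∀ (b : Aᵐᵒᵖ) x, h (((1 : A) ⊗ₜ[k] b) • x) = ((1 : A) ⊗ₜ[k] b) • h x := by
  obtain ⟨s, hs⟩ := Module.projective_def.1 ‹Module.Projective (A ⊗[k] Aᵐᵒᵖ) N›
  let Φ : (N →₀ A ⊗[k] Aᵐᵒᵖ) →ₗ[k] M := Finsupp.lsum k fun x => rightExtend (χ.flip x)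
  have hΦ_single (x : N) t : Φ (.single x t) = rightExtend (χ.flip x) t := by simp [Φ]
  have hΦ_left (a : A) u : Φ ((a ⊗ₜ[k] (1 : Aᵐᵒᵖ)) • u) =
      (a ⊗ₜ[k] (1 : Aᵐᵒᵖ)) • Φ u + χ a (Finsupp.linearCombination _ id u) := by
    induction u using Finsupp.induction_linear with
    | zero => simp
    | add u v hu hv => simp only [smul_add, map_add, hu, hv]; abel
    | single x t =>
      have leibniz : χ.flip x ∘ₗ LinearMap.mulLeft k a =
          Algebra.lsmul k k M (a ⊗ₜ[k] (1 : Aᵐᵒᵖ)) ∘ₗ χ.flip x + χ a ∘ₗ leftOrbit x :=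
        LinearMap.ext fun b => hχ_mul a b x
      rw [Finsupp.smul_single, smul_eq_mul, hΦ_single, hΦ_single, rightExtend_left_mul, leibniz,
        map_add, LinearMap.add_apply, rightExtend_left_smul, ← map_rightExtend _ (hχ_right a),
        rightExtend_leftOrbit, Finsupp.linearCombination_single, id]
  have hΦ_right (b : Aᵐᵒᵖ) u : Φ (((1 : A) ⊗ₜ[k] b) • u) = ((1 : A) ⊗ₜ[k] b) • Φ u := by
    induction u using Finsupp.induction_linear with
    | zero => simp
    | add u v hu hv => simp only [smul_add, map_add, hu, hv]
    | single x t =>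
      rw [Finsupp.smul_single, smul_eq_mul, hΦ_single, hΦ_single, rightExtend_right_mul]
  refine ⟨Φ ∘ₗ s.restrictScalars k, fun a x => ?_, fun b x => ?_⟩
  · simp [hΦ_left, hs x]
  · simp [hΦ_right]

end Bimodules

section Omega

variable {k A}

theorem mulMap_tmul (a : A) (b : Aᵐᵒᵖ) : mulMap k A (a ⊗ₜ[k] b) = a * b.unop := by
  simp [mulMap, TensorProduct.Algebra.smul_def]

variable {M : Type*} [AddCommMonoid M] [Module k M] [Module (A ⊗[k] Aᵐᵒᵖ) M]
  [IsScalarTower k (A ⊗[k] Aᵐᵒᵖ) M]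

theorem rightExtend_rightOrbit (x : M) (t : A ⊗[k] Aᵐᵒᵖ) :
    rightExtend (rightOrbit x) t = rightOrbit (k := k) x (mulMap k A t) := by
  induction t with
  | zero => rw [map_zero, map_zero, map_zero]
  | tmul a b => simp [mulMap_tmul, smul_smul]
  | add t u ht hu => rw [map_add, ht, hu, map_add, map_add]

theorem rightExtend_rightOrbit_of_mem_ker (x : M) (w : LinearMap.ker (mulMap k A)) :
    rightExtend (rightOrbit x) (w : A ⊗[k] Aᵐᵒᵖ) = 0 := by
  rw [rightExtend_rightOrbit, LinearMap.mem_ker.1 w.2, map_zero]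

theorem IsBimoduleDerivation.exists_linearMap {D : A →ₗ[k] M} (hD : IsBimoduleDerivation D) :
    ∃ σ : LinearMap.ker (mulMap k A) →ₗ[A ⊗[k] Aᵐᵒᵖ] M, ∀ w, σ w = rightExtend D w := by
  let σ : LinearMap.ker (mulMap k A) →+ M :=
    (rightExtend D).toAddMonoidHom.comp (LinearMap.ker (mulMap k A)).subtype.toAddMonoidHom
  have hσ_left (a : A) (w : LinearMap.ker (mulMap k A)) :
      σ ((a ⊗ₜ[k] (1 : Aᵐᵒᵖ)) • w) = (a ⊗ₜ[k] (1 : Aᵐᵒᵖ)) • σ w := by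
    have leibniz : D ∘ₗ LinearMap.mulLeft k a =
        Algebra.lsmul k k M (a ⊗ₜ[k] (1 : Aᵐᵒᵖ)) ∘ₗ D + rightOrbit (D a) :=
      LinearMap.ext fun x => hD a x
    calc rightExtend D ((a ⊗ₜ 1) * (w : A ⊗[k] Aᵐᵒᵖ))
        = rightExtend (D ∘ₗ LinearMap.mulLeft k a) (w : A ⊗[k] Aᵐᵒᵖ) := rightExtend_left_mul _ _ _
      _ = (a ⊗ₜ[k] (1 : Aᵐᵒᵖ)) • rightExtend D (w : A ⊗[k] Aᵐᵒᵖ) := by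
        rw [leibniz, map_add, LinearMap.add_apply, rightExtend_left_smul,
          rightExtend_rightOrbit_of_mem_ker, add_zero]
  have hσ_smul := map_smul_of_map_left_smul_of_map_right_smul σ hσ_left
    fun b w => rightExtend_right_mul D b w
  exact ⟨{ σ with map_smul' := hσ_smul }, fun _ => rfl⟩

/-- The universal derivation `d a = a ⊗ 1 - 1 ⊗ a` of `A` into `Ω¹_A`. -/
noncomputable def universalDerivation : A →ₗ[k] LinearMap.ker (mulMap k A) :=
  (leftOrbit (1 : A ⊗[k] Aᵐᵒᵖ) - rightOrbit 1).codRestrict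
    ((LinearMap.ker (mulMap k A)).restrictScalars k) fun a => by
      simp [Algebra.TensorProduct.one_def, mulMap_tmul]

theorem coe_universalDerivation (a : A) :
    (universalDerivation (k := k) a : A ⊗[k] Aᵐᵒᵖ) =
      a ⊗ₜ[k] (1 : Aᵐᵒᵖ) - (1 : A) ⊗ₜ[k] MulOpposite.op a := by
  change leftOrbit (1 : A ⊗[k] Aᵐᵒᵖ) a - rightOrbit 1 a = _
  simp

theorem isBimoduleDerivation_universalDerivation :
    IsBimoduleDerivation (universalDerivation (k := k) (A := A)) := fun a b =>
  Subtype.ext <| by simp [coe_universalDerivation, mul_sub]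

theorem rightExtend_universalDerivation (w : LinearMap.ker (mulMap k A)) :
    rightExtend universalDerivation (w : A ⊗[k] Aᵐᵒᵖ) = w := by
  let i : LinearMap.ker (mulMap k A) →ₗ[k] A ⊗[k] Aᵐᵒᵖ :=
    (LinearMap.ker (mulMap k A)).subtype.restrictScalars k
  have hi : i ∘ₗ universalDerivation + rightOrbit 1 = leftOrbit 1 :=
    LinearMap.ext fun a => sub_add_cancel (leftOrbit (1 : A ⊗[k] Aᵐᵒᵖ) a) (rightOrbit 1 a)
  apply Subtype.ext
  calc i (rightExtend universalDerivation (w : A ⊗[k] Aᵐᵒᵖ))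
      = rightExtend (i ∘ₗ universalDerivation) (w : A ⊗[k] Aᵐᵒᵖ) +
          rightExtend (rightOrbit 1) (w : A ⊗[k] Aᵐᵒᵖ) := by
        rw [rightExtend_rightOrbit_of_mem_ker, add_zero, map_rightExtend i fun _ _ => rfl]
    _ = w := by
        rw [← LinearMap.add_apply, ← map_add, hi, rightExtend_leftOrbit, smul_eq_mul, mul_one]

end Omega

section Cocycles

variable {k A}
  {M : Type*} [AddCommGroup M] [Module k M] [Module (A ⊗[k] Aᵐᵒᵖ) M]
  [IsScalarTower k (A ⊗[k] Aᵐᵒᵖ) M]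

namespace IsHochschildTwoCocycle

variable {f : A →ₗ[k] A →ₗ[k] M}

theorem rightExtend_mul (hf : IsHochschildTwoCocycle f) (a b : A)
    (w : LinearMap.ker (mulMap k A)) :
    rightExtend (f (a * b)) (w : A ⊗[k] Aᵐᵒᵖ) =
      (a ⊗ₜ[k] (1 : Aᵐᵒᵖ)) • rightExtend (f b) (w : A ⊗[k] Aᵐᵒᵖ) +
        rightExtend (f a) ((b ⊗ₜ[k] (1 : Aᵐᵒᵖ)) * (w : A ⊗[k] Aᵐᵒᵖ)) := by
  have cocycle : f (a * b) + rightOrbit (f a b) =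
      Algebra.lsmul k k M (a ⊗ₜ[k] (1 : Aᵐᵒᵖ)) ∘ₗ f b + f a ∘ₗ LinearMap.mulLeft k b :=
    LinearMap.ext fun c => hf a b c
  have h := congrArg (rightExtend · (w : A ⊗[k] Aᵐᵒᵖ)) cocycle
  simpa only [map_add, LinearMap.add_apply, rightExtend_rightOrbit_of_mem_ker, add_zero,
    rightExtend_left_smul, ← rightExtend_left_mul] using h

theorem rightExtend_universalDerivation (hf : IsHochschildTwoCocycle f) (a b : A) :
    rightExtend (f a) (universalDerivation (k := k) b : A ⊗[k] Aᵐᵒᵖ) =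
      f a b - ((1 : A) ⊗ₜ[k] MulOpposite.op b) • (a ⊗ₜ[k] (1 : Aᵐᵒᵖ)) • f 1 1 := by
  rw [coe_universalDerivation, map_sub, rightExtend_tmul, rightExtend_tmul,
    ← Algebra.TensorProduct.one_def, one_smul, hf.apply_one a]

theorem exists_primitive [Module.Projective (A ⊗[k] Aᵐᵒᵖ) (LinearMap.ker (mulMap k A))]
    (hf : IsHochschildTwoCocycle f) :
    ∃ g : A →ₗ[k] M, ∀ a b, g (a * b) =
      (a ⊗ₜ[k] (1 : Aᵐᵒᵖ)) • g b + ((1 : A) ⊗ₜ[k] MulOpposite.op b) • g a + f a b := by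
  let χ : A →ₗ[k] LinearMap.ker (mulMap k A) →ₗ[k] M :=
    (rightExtend ∘ₗ f).compl₂ ((LinearMap.ker (mulMap k A)).subtype.restrictScalars k)
  obtain ⟨h, h_left, h_right⟩ := exists_potential_of_projective χ hf.rightExtend_mul
    fun a b w => rightExtend_right_mul (f a) b w
  have hχ (a b : A) : χ a (universalDerivation b) =
      f a b - ((1 : A) ⊗ₜ[k] MulOpposite.op b) • (a ⊗ₜ[k] (1 : Aᵐᵒᵖ)) • f 1 1 :=
    hf.rightExtend_universalDerivation a b
  refine ⟨h ∘ₗ universalDerivation - leftOrbit (f 1 1), fun a b => ?_⟩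
  simp only [LinearMap.sub_apply, LinearMap.comp_apply, leftOrbit_apply,
    isBimoduleDerivation_universalDerivation a b, map_add, h_left, h_right, hχ, smul_sub]
  rw [smul_smul (a ⊗ₜ[k] (1 : Aᵐᵒᵖ)) (b ⊗ₜ[k] (1 : Aᵐᵒᵖ)), Algebra.TensorProduct.tmul_mul_tmul,
    mul_one]
  abel

end IsHochschildTwoCocycle

end Cocycles

section Actions

variable {k A M : Type*} [CommSemiring k] [Semiring A] [Algebra k A] [AddCommMonoid M] [Module k M]

theorem exists_bimodule_of_commuting_actions (left : A →ₐ[k] Module.End k M)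
    (right : Aᵐᵒᵖ →ₐ[k] Module.End k M) (h : ∀ a b, Commute (left a) (right b)) :
    ∃ (_ : Module (A ⊗[k] Aᵐᵒᵖ) M) (_ : IsScalarTower k (A ⊗[k] Aᵐᵒᵖ) M),
      (∀ (a : A) (x : M), (a ⊗ₜ[k] (1 : Aᵐᵒᵖ)) • x = left a x) ∧
      ∀ (b : Aᵐᵒᵖ) (x : M), ((1 : A) ⊗ₜ[k] b) • x = right b x := by
  let act : A ⊗[k] Aᵐᵒᵖ →ₐ[k] Module.End k M := Algebra.TensorProduct.lift left right h
  let _ : Module (A ⊗[k] Aᵐᵒᵖ) M := Module.compHom M act.toRingHom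
  have smul_eq (t : A ⊗[k] Aᵐᵒᵖ) (x : M) : t • x = act t x := rfl
  exact ⟨_, ⟨fun c t x => by simp [smul_eq]⟩, fun a x => by simp [smul_eq, act],
    fun b x => by simp [smul_eq, act]⟩

end Actions

section SquareZeroKernel

variable {k A R S : Type*} [CommRing k] [Ring A] [Algebra k A] [Ring R] [Algebra k R]
  [Ring S] [Algebra k S]

/-- The kernel of `p` is an ideal of square zero. -/
def HasSquareZeroKernel (p : R →ₐ[k] S) : Prop :=
  ∀ x y, p x = 0 → p y = 0 → x * y = 0

namespace HasSquareZeroKernel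

variable {p : R →ₐ[k] S} (hp : HasSquareZeroKernel p)

include hp

theorem mul_left_congr {r r' n : R} (hr : p r = p r') (hn : p n = 0) : r * n = r' * n :=
  sub_eq_zero.1 <| by rw [← sub_mul]; exact hp _ _ (by rw [map_sub, hr, sub_self]) hn

theorem mul_right_congr {r r' n : R} (hr : p r = p r') (hn : p n = 0) : n * r = n * r' :=
  sub_eq_zero.1 <| by rw [← mul_sub]; exact hp _ _ hn (by rw [map_sub, hr, sub_self])

theorem exists_bimodule_ker {φ : A →ₐ[k] S} {s : A →ₗ[k] R} (hs : ∀ a, p (s a) = φ a) :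
    ∃ (_ : Module (A ⊗[k] Aᵐᵒᵖ) (LinearMap.ker p.toLinearMap))
      (_ : IsScalarTower k (A ⊗[k] Aᵐᵒᵖ) (LinearMap.ker p.toLinearMap)),
      (∀ (a : A) (n : LinearMap.ker p.toLinearMap),
        (((a ⊗ₜ[k] (1 : Aᵐᵒᵖ)) • n : LinearMap.ker p.toLinearMap) : R) = s a * n) ∧
      ∀ (b : Aᵐᵒᵖ) (n : LinearMap.ker p.toLinearMap),
        ((((1 : A) ⊗ₜ[k] b) • n : LinearMap.ker p.toLinearMap) : R) = n * s b.unop := by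
  have mem_ker (n : LinearMap.ker p.toLinearMap) : p n = 0 := n.2
  have hs_one : p (s 1) = p 1 := by simp [hs]
  have hs_mul (a b : A) : p (s (a * b)) = p (s a * s b) := by simp [hs]
  let left : A →ₐ[k] Module.End k (LinearMap.ker p.toLinearMap) := .ofLinearMap
    (.mk₂ k (fun a n => ⟨s a * n, by simp [mem_ker]⟩)
      (fun _ _ _ => Subtype.ext <| by simp [add_mul]) (fun _ _ _ => Subtype.ext <| by simp)
      (fun _ _ _ => Subtype.ext <| by simp [mul_add]) (fun _ _ _ => Subtype.ext <| by simp))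
    (LinearMap.ext fun n => Subtype.ext <| (hp.mul_left_congr hs_one n.2).trans (one_mul _))
    fun a b => LinearMap.ext fun n => Subtype.ext <|
      (hp.mul_left_congr (hs_mul a b) n.2).trans (mul_assoc _ _ _)
  let right : Aᵐᵒᵖ →ₐ[k] Module.End k (LinearMap.ker p.toLinearMap) := .ofLinearMap
    (.mk₂ k (fun b n => ⟨n * s b.unop, by simp [mem_ker]⟩)
      (fun _ _ _ => Subtype.ext <| by simp [mul_add]) (fun _ _ _ => Subtype.ext <| by simp)
      (fun _ _ _ => Subtype.ext <| by simp [add_mul]) (fun _ _ _ => Subtype.ext <| by simp))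
    (LinearMap.ext fun n => Subtype.ext <| (hp.mul_right_congr hs_one n.2).trans (mul_one _))
    fun a b => LinearMap.ext fun n => Subtype.ext <|
      (hp.mul_right_congr (hs_mul b.unop a.unop) n.2).trans (mul_assoc _ _ _).symm
  obtain ⟨mod, tower, hleft, hright⟩ := exists_bimodule_of_commuting_actions left right
    fun a b => LinearMap.ext fun n => Subtype.ext (mul_assoc _ _ _).symm
  exact ⟨mod, tower, fun a n => congrArg Subtype.val (hleft a n),
    fun b n => congrArg Subtype.val (hright b n)⟩

theorem apply_one_eq_one {ψ : A →ₗ[k] R} (hψ_mul : ∀ a b, ψ (a * b) = ψ a * ψ b)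
    (hψ_one : p (ψ 1) = 1) : ψ 1 = 1 := by
  have idem : IsIdempotentElem (ψ 1) := by rw [IsIdempotentElem, ← hψ_mul, mul_one]
  have ker : p (1 - ψ 1) = 0 := by simp [hψ_one]
  have nilp : IsNilpotent (1 - ψ 1) := ⟨2, by rw [sq, hp _ _ ker ker]⟩
  exact (sub_eq_zero.1 (idem.one_sub.eq_zero_of_isNilpotent nilp)).symm

end HasSquareZeroKernel

end SquareZeroKernel

section SquareZeroLifting

universe w

/-- The `k`-algebra `A` lifts along every surjection with kernel of square zero. -/
def HasSquareZeroLifts (k A : Type*) [CommRing k] [Ring A] [Algebra k A] : Prop :=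
  ∀ (R S : Type w) [Ring R] [Algebra k R] [Ring S] [Algebra k S] (p : R →ₐ[k] S),
    Function.Surjective p → HasSquareZeroKernel p →
      ∀ φ : A →ₐ[k] S, ∃ ψ : A →ₐ[k] R, p.comp ψ = φ

variable {k A} {R S : Type*} [Ring R] [Algebra k R] [Ring S] [Algebra k S]
  [Module.Projective (A ⊗[k] Aᵐᵒᵖ) (LinearMap.ker (mulMap k A))]

theorem HasSquareZeroKernel.exists_multiplicative_correction {p : R →ₐ[k] S}
    (hp : HasSquareZeroKernel p) {φ : A →ₐ[k] S} {s : A →ₗ[k] R} (hs : ∀ a, p (s a) = φ a) :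
    ∃ g : A →ₗ[k] R, (∀ a, p (g a) = 0) ∧
      ∀ a b, s (a * b) + g (a * b) = (s a + g a) * (s b + g b) := by
  obtain ⟨_, _, hleft, hright⟩ := hp.exists_bimodule_ker hs
  let f : A →ₗ[k] A →ₗ[k] LinearMap.ker p.toLinearMap :=
    .mk₂ k (fun a b => ⟨s a * s b - s (a * b), by simp [hs]⟩)
      (fun _ _ _ => Subtype.ext <| by simp [add_mul]; abel)
      (fun _ _ _ => Subtype.ext <| by simp [smul_sub])
      (fun _ _ _ => Subtype.ext <| by simp [mul_add]; abel)
      (fun _ _ _ => Subtype.ext <| by simp [smul_sub])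
  have hf (a b : A) : (f a b : R) = s a * s b - s (a * b) := rfl
  have cocycle : IsHochschildTwoCocycle f := fun a b c => Subtype.ext <| by
    simp only [Submodule.coe_add, hleft, hright, hf, MulOpposite.unop_op, sub_mul, mul_sub,
      mul_assoc]
    abel
  obtain ⟨g, hg⟩ := cocycle.exists_primitive
  have g_mem (a : A) : p (g a) = 0 := (g a).2
  refine ⟨(LinearMap.ker p.toLinearMap).subtype ∘ₗ g, g_mem, fun a b => ?_⟩
  have hg_mul : (g (a * b) : R) = s a * g b + g a * s b + (s a * s b - s (a * b)) := by
    rw [hg, Submodule.coe_add, Submodule.coe_add, hleft, hright, hf, MulOpposite.unop_op]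
  calc s (a * b) + (g (a * b) : R) = s a * s b + s a * g b + g a * s b + g a * g b := by
        rw [hg_mul, hp _ _ (g_mem a) (g_mem b)]; abel
    _ = (s a + g a) * (s b + g b) := by rw [add_mul, mul_add, mul_add]; abel

theorem HasSquareZeroKernel.exists_lift_of_projective {p : R →ₐ[k] S}
    (hp : HasSquareZeroKernel p) (hsurj : Function.Surjective p) (φ : A →ₐ[k] S) :
    ∃ ψ : A →ₐ[k] R, p.comp ψ = φ := by
  obtain ⟨s, hs⟩ := Module.projective_lifting_property p.toLinearMap φ.toLinearMap hsurj
  replace hs (a : A) : p (s a) = φ a := LinearMap.congr_fun hs a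
  obtain ⟨g, hg, hmul⟩ := hp.exists_multiplicative_correction hs
  have hlift (a : A) : p ((s + g) a) = φ a := by simp [hs, hg]
  exact ⟨.ofLinearMap (s + g) (hp.apply_one_eq_one hmul ((hlift 1).trans (map_one φ))) hmul,
    AlgHom.ext hlift⟩

theorem hasSquareZeroLifts_of_projective : HasSquareZeroLifts.{w} k A :=
  fun _ _ _ _ _ _ _ hsurj hp φ => hp.exists_lift_of_projective hsurj φ

end SquareZeroLifting

section NilpotentLifting

universe w

variable {k A : Type*} [CommRing k] [Ring A] [Algebra k A]

theorem HasSquareZeroLifts.exists_lift_of_prod_eq_zero (h : HasSquareZeroLifts.{w} k A)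
    (m : ℕ) {R S : Type w} [Ring R] [Algebra k R] [Ring S] [Algebra k S] (p : R →ₐ[k] S)
    (hsurj : Function.Surjective p)
    (hp : ∀ l : List R, l.length = m + 1 → (∀ x ∈ l, p x = 0) → l.prod = 0) (φ : A →ₐ[k] S) :
    ∃ ψ : A →ₐ[k] R, p.comp ψ = φ := by
  induction m generalizing R with
  | zero =>
    refine h R S p hsurj (fun x y hx _ => ?_) φ
    have hx : [x].prod = 0 := hp [x] rfl (by simpa using hx)
    rw [← List.prod_singleton (x := x), hx, zero_mul]
  | succ m ih =>
    let J : Ideal R := RingHom.ker p ⊓ Module.annihilator R (RingHom.ker p)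
    have : J.IsTwoSided :=
      ⟨fun b hx => ⟨Ideal.mul_mem_right b _ hx.1, Ideal.mul_mem_right b _ hx.2⟩⟩
    let q : R →ₐ[k] R ⧸ J := Ideal.Quotient.mkₐ k J
    have hq : Function.Surjective q := Ideal.Quotient.mkₐ_surjective k J
    have hq_ker {x : R} : q x = 0 ↔ p x = 0 ∧ ∀ n, p n = 0 → x * n = 0 := by
      simp [q, J, Ideal.Quotient.eq_zero_iff_mem, Module.mem_annihilator]
    let p' : R ⧸ J →ₐ[k] S := Ideal.Quotient.liftₐ J p fun _ hx => hx.1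
    obtain ⟨χ, hχ⟩ : ∃ χ : A →ₐ[k] R ⧸ J, p'.comp χ = φ := by
      refine ih p' (Function.Surjective.of_comp (g := q) hsurj) fun l hl hl_ker => ?_
      obtain ⟨L, rfl⟩ := List.map_surjective_iff.2 hq l
      rw [List.length_map] at hl
      replace hl_ker : ∀ x ∈ L, p x = 0 := fun x hx => hl_ker (q x) (List.mem_map_of_mem hx)
      rw [← map_list_prod, hq_ker]
      refine ⟨?_, fun n hn => ?_⟩
      · obtain ⟨x, L, rfl⟩ := List.exists_of_length_succ L hl
        rw [List.prod_cons, map_mul, hl_ker x List.mem_cons_self, zero_mul]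
      · have hLn_ker : ∀ x ∈ L ++ [n], p x = 0 := by
          simpa only [List.forall_mem_append, List.forall_mem_singleton] using ⟨hl_ker, hn⟩
        simpa using hp (L ++ [n]) (by simp [hl]) hLn_ker
    obtain ⟨ψ, hψ⟩ := h R (R ⧸ J) q hq
      (fun x y hx hy => (hq_ker.1 hx).2 y (hq_ker.1 hy).1) χ
    exact ⟨ψ, by rw [← hχ, ← hψ]; rfl⟩

end NilpotentLifting

section TrivialExtension

/-- An `A ⊗[k] Aᵐᵒᵖ`-module `M`, seen as a module over `A` and over `Aᵐᵒᵖ`. A type synonym, since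
`M` may already carry unrelated actions of `A` and `Aᵐᵒᵖ`. -/
def AsBimodule (_k _A M : Type*) : Type _ := M

namespace AsBimodule

variable (k A M : Type*) [CommSemiring k] [Semiring A] [Algebra k A] [AddCommGroup M]
  [Module (A ⊗[k] Aᵐᵒᵖ) M]

instance : AddCommGroup (AsBimodule k A M) := inferInstanceAs (AddCommGroup M)

instance : Module (A ⊗[k] Aᵐᵒᵖ) (AsBimodule k A M) :=
  inferInstanceAs (Module (A ⊗[k] Aᵐᵒᵖ) M)

noncomputable instance : Module A (AsBimodule k A M) :=
  .compHom _ (Algebra.TensorProduct.includeLeft : A →ₐ[k] A ⊗[k] Aᵐᵒᵖ).toRingHom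

noncomputable instance : Module Aᵐᵒᵖ (AsBimodule k A M) :=
  .compHom _ (Algebra.TensorProduct.includeRight : Aᵐᵒᵖ →ₐ[k] A ⊗[k] Aᵐᵒᵖ).toRingHom

instance [Module k M] : Module k (AsBimodule k A M) := inferInstanceAs (Module k M)

instance [Module k M] [IsScalarTower k (A ⊗[k] Aᵐᵒᵖ) M] :
    IsScalarTower k (A ⊗[k] Aᵐᵒᵖ) (AsBimodule k A M) :=
  inferInstanceAs (IsScalarTower k (A ⊗[k] Aᵐᵒᵖ) M)

variable {k A M}

theorem smul_def (a : A) (x : AsBimodule k A M) : a • x = (a ⊗ₜ[k] (1 : Aᵐᵒᵖ)) • x := rfl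

theorem op_smul_def (b : Aᵐᵒᵖ) (x : AsBimodule k A M) : b • x = ((1 : A) ⊗ₜ[k] b) • x := rfl

instance : SMulCommClass A Aᵐᵒᵖ (AsBimodule k A M) where
  smul_comm := left_smul_right_smul_comm

variable [Module k M] [IsScalarTower k (A ⊗[k] Aᵐᵒᵖ) M]

instance : IsScalarTower k A (AsBimodule k A M) where
  smul_assoc c a x := by rw [smul_def, smul_def, ← TensorProduct.smul_tmul', smul_assoc]

instance : IsScalarTower k Aᵐᵒᵖ (AsBimodule k A M) where
  smul_assoc c b x := by rw [op_smul_def, op_smul_def, TensorProduct.tmul_smul, smul_assoc]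

end AsBimodule

universe u v w

variable {k : Type v} {A : Type u} [CommRing k] [Ring A] [Algebra k A]
  {M N : Type w} [AddCommGroup M] [Module k M] [Module (A ⊗[k] Aᵐᵒᵖ) M]
  [IsScalarTower k (A ⊗[k] Aᵐᵒᵖ) M]
  [AddCommGroup N] [Module k N] [Module (A ⊗[k] Aᵐᵒᵖ) N] [IsScalarTower k (A ⊗[k] Aᵐᵒᵖ) N]

/-- The map `(a, x) ↦ (a, π x)` between trivial square-zero extensions of `A`. -/
noncomputable def trivSqZeroExtMap (π : M →ₗ[A ⊗[k] Aᵐᵒᵖ] N) :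
    TrivSqZeroExt A (AsBimodule k A M) →ₐ[k] TrivSqZeroExt A (AsBimodule k A N) :=
  .ofLinearMap (LinearMap.prodMap (.id : A →ₗ[k] A) (π.restrictScalars k))
    (TrivSqZeroExt.ext rfl (map_zero π))
    fun _ _ => TrivSqZeroExt.ext rfl <|
      (map_add π _ _).trans <| congrArg₂ (· + ·) (map_smul π _ _) (map_smul π _ _)

theorem trivSqZeroExtMap_surjective {π : M →ₗ[A ⊗[k] Aᵐᵒᵖ] N} (hπ : Function.Surjective π) :
    Function.Surjective (trivSqZeroExtMap π) :=
  Function.surjective_id.prodMap hπ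

theorem hasSquareZeroKernel_trivSqZeroExtMap (π : M →ₗ[A ⊗[k] Aᵐᵒᵖ] N) :
    HasSquareZeroKernel (trivSqZeroExtMap π) := fun x y hx hy => by
  have hx : x.fst = 0 := congrArg TrivSqZeroExt.fst hx
  have hy : y.fst = 0 := congrArg TrivSqZeroExt.fst hy
  ext <;> simp [hx, hy]

/-- The algebra map `a ↦ (a, D a)` into the trivial square-zero extension. -/
noncomputable def IsBimoduleDerivation.toAlgHom {D : A →ₗ[k] M} (hD : IsBimoduleDerivation D) :
    A →ₐ[k] TrivSqZeroExt A (AsBimodule k A M) :=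
  .ofLinearMap (LinearMap.prod .id D) (TrivSqZeroExt.ext rfl hD.map_one)
    fun a b => TrivSqZeroExt.ext rfl (hD a b)

theorem HasSquareZeroLifts.exists_derivation_lift (h : HasSquareZeroLifts.{max u w} k A)
    {π : M →ₗ[A ⊗[k] Aᵐᵒᵖ] N} (hπ : Function.Surjective π) {d : A →ₗ[k] N}
    (hd : IsBimoduleDerivation d) :
    ∃ D : A →ₗ[k] M, IsBimoduleDerivation D ∧ ∀ a, π (D a) = d a := by
  obtain ⟨ψ, hψ⟩ := h _ _ (trivSqZeroExtMap π) (trivSqZeroExtMap_surjective hπ)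
    (hasSquareZeroKernel_trivSqZeroExtMap π) hd.toAlgHom
  have fst_ψ (a : A) : (ψ a).fst = a := congrArg TrivSqZeroExt.fst (AlgHom.congr_fun hψ a)
  let D : A →ₗ[k] AsBimodule k A M :=
    (TrivSqZeroExt.sndHom A (AsBimodule k A M)).restrictScalars k ∘ₗ ψ.toLinearMap
  have hD (a b : A) : D (a * b) = a • D b + MulOpposite.op b • D a := by
    change (ψ (a * b)).snd = _
    rw [map_mul, TrivSqZeroExt.snd_mul, fst_ψ, fst_ψ]
    rfl
  exact ⟨D, hD, fun a => congrArg TrivSqZeroExt.snd (AlgHom.congr_fun hψ a)⟩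

end TrivialExtension

section FormalSmoothness

variable {k A}

theorem formallySmoothNC_iff_hasSquareZeroLifts :
    FormallySmoothNC k A ↔ HasSquareZeroLifts.{0} k A := by
  constructor
  · intro h R S _ _ _ _ p hsurj hp
    refine h R S p hsurj ⟨2, fun f hf => ?_⟩
    simpa using hp _ _ (hf 0) (hf 1)
  · rintro h R S _ _ _ _ p hsurj ⟨m, hm⟩
    refine h.exists_lift_of_prod_eq_zero m p hsurj fun l hl hl_ker => ?_
    obtain ⟨x, l, rfl⟩ := List.exists_of_length_succ l hl
    obtain rfl : l.length = m := Nat.succ.inj hl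
    have hl_prod := hm l.get fun i => hl_ker _ (List.mem_cons_of_mem x (l.get_mem i))
    rw [List.prod_cons, ← List.ofFn_get l, hl_prod, mul_zero]

theorem HasSquareZeroLifts.projective (h : HasSquareZeroLifts.{0} k A) :
    Module.Projective (A ⊗[k] Aᵐᵒᵖ) (LinearMap.ker (mulMap k A)) := by
  let π : (LinearMap.ker (mulMap k A) →₀ A ⊗[k] Aᵐᵒᵖ) →ₗ[A ⊗[k] Aᵐᵒᵖ] LinearMap.ker (mulMap k A) :=
    Finsupp.linearCombination _ id
  have hπ : Function.Surjective π := Finsupp.linearCombination_id_surjective _ _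
  have hd : IsBimoduleDerivation (universalDerivation (k := k) (A := A)) :=
    isBimoduleDerivation_universalDerivation
  obtain ⟨D, hD, hπD⟩ := h.exists_derivation_lift
    (M := LinearMap.ker (mulMap k A) →₀ A ⊗[k] Aᵐᵒᵖ) (N := LinearMap.ker (mulMap k A)) hπ hd
  obtain ⟨σ, hσ⟩ := hD.exists_linearMap
  have hcomp : π.restrictScalars k ∘ₗ D = universalDerivation := LinearMap.ext hπD
  refine Module.projective_def.2 ⟨σ, fun w => ?_⟩
  calc π (σ w) = rightExtend (π.restrictScalars k ∘ₗ D) (w : A ⊗[k] Aᵐᵒᵖ) := by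
        rw [hσ]; exact map_rightExtend (π.restrictScalars k) (fun _ => map_smul π _) D w
    _ = rightExtend universalDerivation (w : A ⊗[k] Aᵐᵒᵖ) := by rw [hcomp]
    _ = w := rightExtend_universalDerivation w

end FormalSmoothness

theorem formallySmooth_iff_omega_projective :
    FormallySmoothNC k A ↔
      Module.Projective (A ⊗[k] Aᵐᵒᵖ) (LinearMap.ker (mulMap k A)) :=
  formallySmoothNC_iff_hasSquareZeroLifts.trans
    ⟨HasSquareZeroLifts.projective, fun _ => hasSquareZeroLifts_of_projective⟩

end
end
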